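/- Let (X,B) be a standard Borel space. For every Polish topology τ on X generating B there are random variables {Ξ_A : A ∈ B}, Ξ_A : F*_τ(X) → ℤ_{≥0} ∪ {∞} defined on the Effros space of infinite τ-closed subsets, and a one-to-one correspondence μ ↦ μ*_τ from the non-atomic σ-finite infinite τ-locally finite Borel measures on (X,B) to probability measures on (F*_τ(X), E*_τ(X)), such that for every such μ: (i) {Ξ_A : A ∈ B} forms a Poisson point process with base space (X,B,μ) under μ*_τ, and μ*_τ is the unique probability measure with this property; (ii) μ*_τ is supported on the class of τ-discrete closed sets; (iii) on the support of μ*_τ one has Ξ_A(F) = #(A ∩ F) for every A ∈ B. -/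

import Mathlib

/-!
Statement 9 (Poisson random set): for a standard Borel space `(X, B)` and any Polish
topology `τ` generating `B`, there are random variables `Ξ_A : F*_τ(X) → ℕ∞` on the
Effros space of infinite closed sets and a one-to-one correspondence `μ ↦ μ*_τ` from
non-atomic σ-finite infinite `τ`-locally finite Borel measures to probability measures
on `F*_τ(X)` making `{Ξ_A}` a Poisson point process with base `(X, B, μ)`; `μ*_τ` is
supported on the `τ`-discrete closed sets, on which `Ξ_A` counts `#(A ∩ F)`.
-/

open MeasureTheory Filter Topology
open scoped ENNReal symmDiff

noncomputable section

/-- The Effros Borel space: the set of `τ`-closed subsets of `X`. -/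
def EffrosSpace {X : Type*} (τ : TopologicalSpace X) : Type _ :=
  {F : Set X // @IsClosed X τ F}

/-- The Effros σ-algebra, generated by the sets `B_O = {F closed | F ∩ O ≠ ∅}`,
`O` open. -/
instance {X : Type*} (τ : TopologicalSpace X) : MeasurableSpace (EffrosSpace τ) :=
  MeasurableSpace.generateFrom
    {s | ∃ O : Set X, @IsOpen X τ O ∧ s = {F : EffrosSpace τ | (F.1 ∩ O).Nonempty}}

/-- The Effros space of *infinite* `τ`-closed subsets of `X`, with the induced
Effros σ-algebra. -/
def EffrosStar {X : Type*} (τ : TopologicalSpace X) : Type _ :=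
  {F : Set X // @IsClosed X τ F ∧ F.Infinite}

instance {X : Type*} (τ : TopologicalSpace X) : MeasurableSpace (EffrosStar τ) :=
  MeasurableSpace.generateFrom
    {s | ∃ O : Set X, @IsOpen X τ O ∧ s = {F : EffrosStar τ | (F.1 ∩ O).Nonempty}}

/-- A set `F ⊆ X` is `τ`-discrete if every point of `F` is isolated in `F`. -/
def IsTauDiscrete {X : Type*} (τ : TopologicalSpace X) (F : Set X) : Prop :=
  ∀ x ∈ F, ∃ O : Set X, @IsOpen X τ O ∧ x ∈ O ∧ F ∩ O = {x}

/-- `N` has the Poisson distribution with mean `a ∈ [0,∞]` under `ℙ`,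
with the convention that for `a ∈ {0,∞}` it is the constant `a`. -/
def HasPoissonLaw {Ω : Type*} [MeasurableSpace Ω] (ℙ : Measure Ω)
    (N : Ω → ℕ∞) (a : ℝ≥0∞) : Prop :=
  if a = 0 then ∀ᵐ ω ∂ℙ, N ω = 0
  else if a = ∞ then ∀ᵐ ω ∂ℙ, N ω = ⊤
  else ∀ k : ℕ, ℙ {ω | N ω = (k : ℕ∞)} =
    ENNReal.ofReal (Real.exp (-(a.toReal)) * a.toReal ^ k / (Nat.factorial k))

/-- `P` is a Poisson point process on `(Ω, ℙ)` with base space `(X, μ)`. -/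
structure IsPPP {X Ω : Type*} [MeasurableSpace X] [MeasurableSpace Ω]
    (μ : Measure X) (ℙ : Measure Ω) (P : Set X → Ω → ℕ∞) : Prop where
  measurable : ∀ A : Set X, MeasurableSet A → Measurable (P A)
  law : ∀ A : Set X, MeasurableSet A → HasPoissonLaw ℙ (P A) (μ A)
  add : ∀ A B : Set X, MeasurableSet A → MeasurableSet B → Disjoint A B →
    ∀ᵐ ω ∂ℙ, P (A ∪ B) ω = P A ω + P B ω


open ProbabilityTheory in
lemma prs_seq_zero (d : ℕ → ℝ) (hd : ∀ k, |d k| ≤ 1)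
    (h : ∀ s : ℝ, 0 < s → s < 1 → HasSum (fun k => d k * s ^ k) 0) : ∀ n, d n = 0 := by
  intro n
  induction n using Nat.strong_induction_on with
  | _ n ih =>
  have key : ∀ s : ℝ, 0 < s → s < 1 → |d n| ≤ s * (1 - s)⁻¹ := by
    intro s hs0 hs1
    have h1 := (hasSum_nat_add_iff' (f := fun k => d k * s ^ k) n).2 (h s hs0 hs1)
    have h2 : ∑ i ∈ Finset.range n, d i * s ^ i = 0 :=
      Finset.sum_eq_zero fun i hi => by rw [ih i (Finset.mem_range.1 hi), zero_mul]
    rw [h2, sub_zero] at h1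
    have h3 := h1.mul_right ((s ^ n)⁻¹)
    have h4 : HasSum (fun k => d (k + n) * s ^ k) 0 := by
      convert! h3 using 1
      · ext k
        have : s ^ n ≠ 0 := by positivity
        rw [pow_add]; field_simp
      · simp
    have h5 := (hasSum_nat_add_iff' (f := fun k => d (k + n) * s ^ k) 1).2 h4
    simp only [Finset.range_one, Finset.sum_singleton, zero_add, pow_zero, mul_one, zero_sub] at h5
    have h6 : HasSum (fun k => s ^ (k + 1)) (s * (1 - s)⁻¹) := by
      have := (hasSum_geometric_of_lt_one hs0.le hs1).mul_left s
      convert! this using 2 with k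
      ring
    have h7 := h5.norm_le_of_bounded h6 (fun k => by
      rw [norm_mul, Real.norm_eq_abs, Real.norm_eq_abs, abs_of_pos (pow_pos hs0 _)]
      calc _ ≤ 1 * s ^ (k + 1) := by
            gcongr; exact hd _
        _ = _ := one_mul _)
    simpa using h7
  have hlim : Tendsto (fun s : ℝ => s * (1 - s)⁻¹) (𝓝[>] 0) (𝓝 (0 * (1 - 0)⁻¹)) := by
    apply Tendsto.mono_left _ nhdsWithin_le_nhds
    apply ContinuousAt.tendsto
    apply ContinuousAt.mul continuousAt_id
    apply ContinuousAt.inv₀ (by fun_prop) (by norm_num)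
  have h0 : |d n| ≤ 0 * (1 - 0)⁻¹ := by
    apply ge_of_tendsto hlim
    filter_upwards [Ioo_mem_nhdsGT (zero_lt_one' ℝ)] with s hs
    exact key s hs.1 hs.2
  simpa using h0

/-- `s ^ x` for `x : ℕ∞`, with `s ^ ⊤ = 0`. -/
def prsPow (s : ℝ≥0∞) (x : ℕ∞) : ℝ≥0∞ := if x = ⊤ then 0 else s ^ x.toNat

lemma prsPow_eq_tsum (s : ℝ≥0∞) (x : ℕ∞) :
    prsPow s x = ∑' k : ℕ, s ^ k * (if x = (k : ℕ∞) then 1 else 0) := by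
  induction x using ENat.recTopCoe with
  | top => simp [prsPow]
  | coe n =>
    rw [tsum_eq_single n]
    · simp [prsPow]
    · intro b hb
      simp [hb.symm]

lemma prs_lintegral_pow {Ω : Type*} [MeasurableSpace Ω] (P : Measure Ω) (N : Ω → ℕ∞)
    (hN : Measurable N) (s : ℝ≥0∞) :
    ∫⁻ ω, prsPow s (N ω) ∂P = ∑' k : ℕ, s ^ k * P {ω | N ω = k} := by
  simp_rw [prsPow_eq_tsum]
  have hm : ∀ k : ℕ, MeasurableSet {ω | N ω = (k : ℕ∞)} := fun k =>
    hN (measurableSet_singleton (k : ℕ∞))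
  rw [lintegral_tsum]
  · congr 1; ext k
    rw [lintegral_const_mul]
    · rw [← lintegral_indicator_one (hm k)]
      simp [Set.indicator_apply]
    · exact Measurable.ite (hm k) measurable_const measurable_const
  · intro k
    exact ((Measurable.ite (hm k) measurable_const measurable_const).const_mul _).aemeasurable

lemma prs_pgf_hasSum (a s : ℝ) :
    HasSum (fun k : ℕ => Real.exp (-a) * a ^ k / k.factorial * s ^ k)
      (Real.exp (-(a * (1 - s)))) := by
  have := (NormedSpace.expSeries_div_hasSum_exp (a * s)).mul_left (Real.exp (-a))
  rw [← Real.exp_eq_exp_ℝ, ← Real.exp_add] at this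
  convert! this using 1
  · ext k; rw [mul_pow]; ring
  · congr 1; ring

lemma prs_law_of_pgf {Ω : Type*} [MeasurableSpace Ω] (P : Measure Ω) [IsProbabilityMeasure P]
    (N : Ω → ℕ∞) (hN : Measurable N) (a : ℝ≥0∞)
    (h : ∀ s : ℝ, 0 < s → s < 1 → ∫⁻ ω, prsPow (ENNReal.ofReal s) (N ω) ∂P =
      EReal.exp (-((a * ENNReal.ofReal (1 - s) : ℝ≥0∞) : EReal))) :
    HasPoissonLaw P N a := by
  by_cases ha : a = ∞
  · subst ha
    simp only [HasPoissonLaw, ENNReal.top_ne_zero, if_true, if_false]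
    have h1 := h (1/2) (by norm_num) (by norm_num)
    rw [ENNReal.top_mul (by norm_num)] at h1
    simp only [EReal.coe_ennreal_top, EReal.neg_top, EReal.exp_bot] at h1
    have hm : Measurable fun ω => prsPow (ENNReal.ofReal (1/2)) (N ω) :=
      (Measurable.of_discrete (f := prsPow (ENNReal.ofReal (1/2)))).comp hN
    rw [lintegral_eq_zero_iff hm] at h1
    filter_upwards [h1] with ω hω
    by_contra hne
    simp [prsPow, hne] at hω
  · have hk : ∀ k : ℕ, P {ω | N ω = (k : ℕ∞)} =
        ENNReal.ofReal (Real.exp (-(a.toReal)) * a.toReal ^ k / (Nat.factorial k)) := by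
      have hz := prs_seq_zero (fun k => P.real {ω | N ω = (k : ℕ∞)} -
        Real.exp (-(a.toReal)) * a.toReal ^ k / (Nat.factorial k)) ?_ ?_
      · intro k
        have := hz k
        rw [← ofReal_measureReal]
        congr 1; linarith
      · intro k
        have h1 : P.real {ω | N ω = (k : ℕ∞)} ≤ 1 := measureReal_le_one
        have h2 : 0 ≤ P.real {ω | N ω = (k : ℕ∞)} := measureReal_nonneg
        have h3 : 0 ≤ Real.exp (-(a.toReal)) * a.toReal ^ k / (Nat.factorial k) := by positivity
        have h4 : Real.exp (-(a.toReal)) * a.toReal ^ k / (Nat.factorial k) ≤ 1 := by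
          have := le_hasSum (prs_pgf_hasSum a.toReal 1) k (fun j _ => by positivity)
          simpa using this
        rw [abs_le]; constructor <;> linarith
      · intro s hs0 hs1
        have h1 := h s hs0 hs1
        rw [prs_lintegral_pow P N hN] at h1
        have hR : EReal.exp (-((a * ENNReal.ofReal (1 - s) : ℝ≥0∞) : EReal)) =
            ENNReal.ofReal (Real.exp (-(a.toReal * (1 - s)))) := by
          conv_lhs => rw [← ENNReal.ofReal_toReal ha]
          rw [← ENNReal.ofReal_mul ENNReal.toReal_nonneg, EReal.coe_ennreal_ofReal,
            max_eq_left (mul_nonneg ENNReal.toReal_nonneg (by linarith)), ← EReal.coe_neg,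
            EReal.exp_coe]
        rw [hR] at h1
        have h2 : HasSum (fun k : ℕ => P.real {ω | N ω = (k : ℕ∞)} * s ^ k)
            (Real.exp (-(a.toReal * (1 - s)))) := by
          have h3 : (fun k : ℕ => P.real {ω | N ω = (k : ℕ∞)} * s ^ k) =
              fun k => (ENNReal.ofReal s ^ k * P {ω | N ω = (k : ℕ∞)}).toReal := by
            ext k
            rw [ENNReal.toReal_mul, ENNReal.toReal_pow, ENNReal.toReal_ofReal hs0.le, mul_comm]
            rfl
          have hne : ∑' k : ℕ, ENNReal.ofReal s ^ k * P {ω | N ω = (k : ℕ∞)} ≠ ∞ := by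
            rw [h1]; exact ENNReal.ofReal_ne_top
          have h4 := ENNReal.hasSum_toReal hne
          rw [h3]
          convert! h4 using 1
          rw [← ENNReal.tsum_toReal_eq (fun k => ENNReal.ne_top_of_tsum_ne_top hne k), h1,
            ENNReal.toReal_ofReal (Real.exp_pos _).le]
        have h5 := h2.sub (prs_pgf_hasSum a.toReal s)
        rw [sub_self] at h5
        convert! h5 using 2
        ring
    by_cases h0 : a = 0
    · subst h0
      simp only [HasPoissonLaw, if_true]
      have := hk 0
      simp only [Nat.cast_zero, ENNReal.toReal_zero, neg_zero, Real.exp_zero, pow_zero, mul_one,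
        Nat.factorial_zero, Nat.cast_one, div_one, ENNReal.ofReal_one] at this
      exact (prob_compl_eq_zero_iff (hN (measurableSet_singleton 0))).2 this
    · simp only [HasPoissonLaw, h0, ha, if_false]
      exact hk

lemma prs_poisson_pgf (r : NNReal) (t : ℝ) (ht0 : 0 ≤ t) :
    ∫⁻ n, ENNReal.ofReal t ^ n ∂(ProbabilityTheory.poissonMeasure r) =
      ENNReal.ofReal (Real.exp (-(r * (1 - t)))) := by
  rw [lintegral_countable']
  simp_rw [ProbabilityTheory.poissonMeasure_singleton]
  rw [← (prs_pgf_hasSum r t).tsum_eq, ENNReal.ofReal_tsum_of_nonneg (fun n => by positivity)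
    (prs_pgf_hasSum r t).summable]
  congr 1; ext n
  rw [← ENNReal.ofReal_pow ht0, mul_comm, ← ENNReal.ofReal_mul (by positivity)]

lemma prs_prod_tendsto (I : Set (ℕ × ℕ)) [DecidablePred (· ∈ I)] (N : ℕ → ℕ)
    (hI : ∀ p ∈ I, p.2 < N p.1) (s : ℝ≥0∞) (hs : s < 1) :
    Tendsto (fun m => ∏ n ∈ Finset.range m, ∏ k ∈ Finset.range (N n),
      if (n, k) ∈ I then s else 1) atTop (𝓝 (prsPow s I.encard)) := by
  classical
  set J : ℕ → Finset (ℕ × ℕ) := fun m => (Finset.range m).biUnion fun n =>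
    ((Finset.range (N n)).filter (fun k => (n, k) ∈ I)).image (Prod.mk n) with hJ
  have hJmem : ∀ m p, p ∈ J m ↔ p ∈ I ∧ p.1 < m := by
    rintro m ⟨n, k⟩
    simp only [hJ, Finset.mem_biUnion, Finset.mem_range, Finset.mem_image, Finset.mem_filter,
      Prod.mk.injEq]
    constructor
    · rintro ⟨a, ha, b, ⟨hb, hab⟩, rfl, rfl⟩
      exact ⟨hab, ha⟩
    · rintro ⟨h1, h2⟩
      exact ⟨n, h2, k, ⟨hI _ h1, h1⟩, rfl, rfl⟩
  have hprod : ∀ m, (∏ n ∈ Finset.range m, ∏ k ∈ Finset.range (N n),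
      if (n, k) ∈ I then s else 1) = s ^ (J m).card := by
    intro m
    rw [hJ, Finset.card_biUnion]
    · rw [← Finset.prod_pow_eq_pow_sum]
      refine Finset.prod_congr rfl fun n _ => ?_
      rw [Finset.card_image_of_injective _ (Prod.mk_right_injective n), Finset.prod_ite]
      simp
    · intro a _ b _ hab
      rw [Function.onFun, Finset.disjoint_left]
      intro p hp hq
      simp only [Finset.mem_image] at hp hq
      obtain ⟨_, _, rfl⟩ := hp
      obtain ⟨_, _, h⟩ := hq
      exact hab (Prod.mk.inj h).1.symm
  simp_rw [hprod]
  have hsub : ∀ t : Finset (ℕ × ℕ), (∀ p ∈ t, p ∈ I) → ∀ᶠ m in atTop, t ⊆ J m := by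
    intro t ht
    filter_upwards [eventually_gt_atTop (t.sup Prod.fst)] with m hm p hp
    exact (hJmem m p).2 ⟨ht p hp, lt_of_le_of_lt (Finset.le_sup (f := Prod.fst) hp) hm⟩
  by_cases hfin : I.Finite
  · have : ∀ᶠ m in atTop, s ^ (J m).card = prsPow s I.encard := by
      filter_upwards [hsub hfin.toFinset (fun p hp => hfin.mem_toFinset.1 hp)] with m hm
      have hEq : J m = hfin.toFinset := by
        apply Finset.Subset.antisymm _ hm
        intro p hp
        exact hfin.mem_toFinset.2 ((hJmem m p).1 hp).1
      rw [hEq, hfin.encard_eq_coe_toFinset_card]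
      simp [prsPow]
    exact tendsto_const_nhds.congr' (this.mono fun m hm => hm.symm)
  · have hinf : I.Infinite := hfin
    have : prsPow s I.encard = 0 := by simp [prsPow, hinf]
    rw [this]
    apply (ENNReal.tendsto_pow_atTop_nhds_zero_of_lt_one hs).comp
    rw [tendsto_atTop]
    intro b
    obtain ⟨t, ht, hcard⟩ := hinf.exists_subset_card_eq b
    filter_upwards [hsub t (fun p hp => ht hp)] with m hm
    rw [← hcard]
    exact Finset.card_le_card hm

/-- The probability space carrying Poisson variables and independent points. -/
def prsM {X : Type*} [MeasurableSpace X] (P : ℕ → Measure X) (c : ℕ → NNReal) :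
    Measure ((ℕ → ℕ) × (ℕ × ℕ → X)) :=
  (Measure.infinitePi fun n => ProbabilityTheory.poissonMeasure (c n)).prod
    (Measure.infinitePi fun p : ℕ × ℕ => P p.1)

/-- The set of indices of points landing in `A`. -/
def prsIdx {X : Type*} (A : Set X) (ω : (ℕ → ℕ) × (ℕ × ℕ → X)) : Set (ℕ × ℕ) :=
  {p | p.2 < ω.1 p.1 ∧ ω.2 p ∈ A}

instance {X : Type*} [MeasurableSpace X] (P : ℕ → Measure X) [∀ n, IsProbabilityMeasure (P n)]
    (c : ℕ → NNReal) : IsProbabilityMeasure (prsM P c) := by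
  unfold prsM; infer_instance

lemma prs_idx_meas {X : Type*} [MeasurableSpace X] (A : Set X) (hA : MeasurableSet A)
    (p : ℕ × ℕ) : MeasurableSet {ω : (ℕ → ℕ) × (ℕ × ℕ → X) | p ∈ prsIdx A ω} := by
  apply MeasurableSet.inter (s₁ := {ω : (ℕ → ℕ) × (ℕ × ℕ → X) | p.2 < ω.1 p.1})
    (s₂ := {ω : (ℕ → ℕ) × (ℕ × ℕ → X) | ω.2 p ∈ A})
  · exact measurableSet_lt measurable_const (by fun_prop)
  · exact (show Measurable fun ω : (ℕ → ℕ) × (ℕ × ℕ → X) => ω.2 p by fun_prop) hA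

lemma prs_encard_meas {Ω ι : Type*} [MeasurableSpace Ω] [Countable ι] (I : Ω → Set ι)
    (h : ∀ i, MeasurableSet {ω | i ∈ I ω}) : Measurable fun ω => (I ω).encard := by
  apply measurable_encard.comp
  rw [measurable_set_iff]
  intro i
  exact measurableSet_setOfPred.1 (h i)

lemma prs_cnt_meas {X : Type*} [MeasurableSpace X] (A : Set X) (hA : MeasurableSet A) :
    Measurable fun ω : (ℕ → ℕ) × (ℕ × ℕ → X) => (prsIdx A ω).encard :=
  prs_encard_meas _ (prs_idx_meas A hA)

lemma prs_exp_eq (a : ℝ) (ha : 0 ≤ a) :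
    EReal.exp (-((ENNReal.ofReal a : ℝ≥0∞) : EReal)) = ENNReal.ofReal (Real.exp (-a)) := by
  rw [EReal.coe_ennreal_ofReal, max_eq_left ha, ← EReal.coe_neg, EReal.exp_coe]

open Classical in
lemma prs_lintegral_prod {X : Type*} [MeasurableSpace X] (P : ℕ → Measure X)
    [∀ n, IsProbabilityMeasure (P n)] (c : ℕ → NNReal) (A : Set X) (hA : MeasurableSet A)
    (s : ℝ) (hs0 : 0 < s) (hs1 : s < 1) (m : ℕ)
    (hmeas : Measurable fun ω : (ℕ → ℕ) × (ℕ × ℕ → X) => ∏ n ∈ Finset.range m,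
      ∏ k ∈ Finset.range (ω.1 n), (if ω.2 (n, k) ∈ A then ENNReal.ofReal s else 1)) :
    ∫⁻ ω, ∏ n ∈ Finset.range m, ∏ k ∈ Finset.range (ω.1 n),
      (if ω.2 (n, k) ∈ A then ENNReal.ofReal s else 1) ∂(prsM P c) =
    EReal.exp (-(((∑ n ∈ Finset.range m, c n * P n A) * ENNReal.ofReal (1 - s) : ℝ≥0∞) : EReal)) := by
  unfold prsM
  rw [lintegral_prod _ hmeas.aemeasurable]
  have hg : Measurable fun x : X => (if x ∈ A then ENNReal.ofReal s else 1) :=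
    Measurable.ite hA measurable_const measurable_const
  set q : ℕ → ℝ := fun n => (P n).real A with hq
  have hq0 : ∀ n, 0 ≤ q n := fun n => measureReal_nonneg
  have hq1 : ∀ n, q n ≤ 1 := fun n => measureReal_le_one
  have ht0 : ∀ n, 0 ≤ 1 - (1 - s) * q n := fun n => by nlinarith [hq0 n, hq1 n]
  have hone : ∀ n, ∫⁻ x, (if x ∈ A then ENNReal.ofReal s else 1) ∂(P n) =
      ENNReal.ofReal (1 - (1 - s) * q n) := by
    intro n
    have : (fun x : X => (if x ∈ A then ENNReal.ofReal s else 1)) =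
        fun x => A.indicator (fun _ => ENNReal.ofReal s) x + Aᶜ.indicator (fun _ => 1) x := by
      ext x; by_cases hx : x ∈ A <;> simp [hx]
    rw [this, lintegral_add_left (measurable_const.indicator hA), lintegral_indicator hA,
      lintegral_indicator hA.compl]
    simp only [lintegral_const, Measure.restrict_apply MeasurableSet.univ, Set.univ_inter, one_mul]
    rw [← ofReal_measureReal, ← ofReal_measureReal, probReal_compl_eq_one_sub hA,
      ← ENNReal.ofReal_mul hs0.le, ← ENNReal.ofReal_add (mul_nonneg hs0.le (hq0 n))
        (by linarith [hq1 n])]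
    congr 1; simp only [hq]; ring
  have hinner : ∀ N : ℕ → ℕ, ∫⁻ Y, ∏ n ∈ Finset.range m, ∏ k ∈ Finset.range (N n),
      (if Y (n, k) ∈ A then ENNReal.ofReal s else 1)
        ∂(Measure.infinitePi fun p : ℕ × ℕ => P p.1) =
      ∏ n ∈ Finset.range m, ENNReal.ofReal (1 - (1 - s) * q n) ^ N n := by
    intro N
    set r : Finset (ℕ × ℕ) := (Finset.range m).biUnion
      fun n => (Finset.range (N n)).image (Prod.mk n) with hr
    have hmem : ∀ p : ℕ × ℕ, p ∈ r ↔ p.1 ∈ Finset.range m ∧ p.2 ∈ Finset.range (N p.1) := by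
      rintro ⟨n, k⟩
      simp only [hr, Finset.mem_biUnion, Finset.mem_image, Prod.mk.injEq]
      constructor
      · rintro ⟨a, ha, b, hb, rfl, rfl⟩
        exact ⟨ha, hb⟩
      · rintro ⟨h1, h2⟩
        exact ⟨n, h1, k, h2, rfl, rfl⟩
    have h1 : ∀ Y : ℕ × ℕ → X, (∏ n ∈ Finset.range m, ∏ k ∈ Finset.range (N n),
      (if Y (n, k) ∈ A then ENNReal.ofReal s else 1)) =
      ∏ p ∈ r, (if Y p ∈ A then ENNReal.ofReal s else 1) := fun Y =>
      (Finset.prod_finset_product r (Finset.range m) (fun n => Finset.range (N n)) hmem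
        (f := fun p => if Y p ∈ A then ENNReal.ofReal s else 1)).symm
    simp_rw [h1]
    rw [ProbabilityTheory.lintegral_prod_eq_prod_lintegral_of_indepFun r
      (fun p (Y : ℕ × ℕ → X) => if Y p ∈ A then ENNReal.ofReal s else 1)
      (ProbabilityTheory.iIndepFun_infinitePi
        (X := fun (_ : ℕ × ℕ) (x : X) => if x ∈ A then ENNReal.ofReal s else 1) (fun _ => hg))
      (fun p => hg.comp (measurable_pi_apply p))]
    have h2 : ∀ p : ℕ × ℕ, ∫⁻ Y : ℕ × ℕ → X, (if Y p ∈ A then ENNReal.ofReal s else 1)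
        ∂(Measure.infinitePi fun p : ℕ × ℕ => P p.1) = ENNReal.ofReal (1 - (1 - s) * q p.1) := by
      intro p
      rw [← hone, ← Measure.infinitePi_map_eval (fun p : ℕ × ℕ => P p.1) p,
        lintegral_map hg (by fun_prop)]
    simp_rw [h2]
    rw [Finset.prod_finset_product r (Finset.range m) (fun n => Finset.range (N n)) hmem]
    simp
  simp_rw [hinner]
  rw [ProbabilityTheory.lintegral_prod_eq_prod_lintegral_of_indepFun (Finset.range m)
      (fun n (N : ℕ → ℕ) => ENNReal.ofReal (1 - (1 - s) * q n) ^ N n)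
      (ProbabilityTheory.iIndepFun_infinitePi
        (X := fun (n : ℕ) (x : ℕ) => ENNReal.ofReal (1 - (1 - s) * q n) ^ x)
        (fun _ => Measurable.of_discrete))
      (fun n => (Measurable.of_discrete (f := fun x : ℕ =>
        ENNReal.ofReal (1 - (1 - s) * q n) ^ x)).comp (measurable_pi_apply n))]
  have h3 : ∀ n : ℕ, ∫⁻ N : ℕ → ℕ, ENNReal.ofReal (1 - (1 - s) * q n) ^ N n
      ∂(Measure.infinitePi fun n => ProbabilityTheory.poissonMeasure (c n)) =
      ENNReal.ofReal (Real.exp (-(c n * q n * (1 - s)))) := by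
    intro n
    have := prs_poisson_pgf (c n) (1 - (1 - s) * q n) (ht0 n)
    rw [← Measure.infinitePi_map_eval (fun n => ProbabilityTheory.poissonMeasure (c n)) n,
      lintegral_map Measurable.of_discrete (by fun_prop)] at this
    rw [this]
    congr 2; ring
  simp_rw [h3]
  rw [← ENNReal.ofReal_prod_of_nonneg (fun _ _ => (Real.exp_pos _).le), ← Real.exp_sum]
  have h4 : (∑ n ∈ Finset.range m, c n * P n A) * ENNReal.ofReal (1 - s) =
      ENNReal.ofReal (∑ n ∈ Finset.range m, c n * q n * (1 - s)) := by
    rw [ENNReal.ofReal_sum_of_nonneg, Finset.sum_mul]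
    · refine Finset.sum_congr rfl fun n _ => ?_
      rw [ENNReal.ofReal_mul (mul_nonneg (c n).coe_nonneg (hq0 n)),
        ENNReal.ofReal_mul (c n).coe_nonneg,
        ofReal_measureReal]
      simp
    · intro n _
      exact mul_nonneg (mul_nonneg (c n).coe_nonneg (hq0 n)) (by linarith)
  rw [h4, prs_exp_eq, Finset.sum_neg_distrib]
  exact Finset.sum_nonneg fun n _ => mul_nonneg (mul_nonneg (c n).coe_nonneg (hq0 n)) (by linarith)

open Classical in
lemma prs_cnt_law {X : Type*} [MeasurableSpace X] (P : ℕ → Measure X)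
    [∀ n, IsProbabilityMeasure (P n)] (c : ℕ → NNReal) (A : Set X) (hA : MeasurableSet A) :
    HasPoissonLaw (prsM P c) (fun ω => (prsIdx A ω).encard) (∑' n, c n * P n A) := by
  apply prs_law_of_pgf _ _ (prs_cnt_meas A hA)
  intro s hs0 hs1
  set f : ℕ → (ℕ → ℕ) × (ℕ × ℕ → X) → ℝ≥0∞ := fun m ω => ∏ n ∈ Finset.range m,
      ∏ k ∈ Finset.range (ω.1 n), (if ω.2 (n, k) ∈ A then ENNReal.ofReal s else 1) with hf
  have hs1' : ENNReal.ofReal s < 1 := by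
    rw [← ENNReal.ofReal_one]; exact (ENNReal.ofReal_lt_ofReal_iff one_pos).2 hs1
  have hg : Measurable fun x : X => (if x ∈ A then ENNReal.ofReal s else 1) :=
    Measurable.ite hA measurable_const measurable_const
  have hfm : ∀ m, Measurable (f m) := by
    intro m
    refine Finset.measurable_fun_prod (M := ℝ≥0∞) _ fun n _ => ?_
    have h1 : Measurable fun z : ℕ × ((ℕ → ℕ) × (ℕ × ℕ → X)) =>
        ∏ k ∈ Finset.range z.1, (if z.2.2 (n, k) ∈ A then ENNReal.ofReal s else 1) := by
      apply measurable_from_prod_countable_right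
      intro j
      change Measurable fun y : (ℕ → ℕ) × (ℕ × ℕ → X) =>
        ∏ k ∈ Finset.range j, (if y.2 (n, k) ∈ A then ENNReal.ofReal s else 1)
      refine Finset.measurable_fun_prod (M := ℝ≥0∞) _ fun k _ => ?_
      exact hg.comp (by fun_prop)
    exact h1.comp (show Measurable fun ω : (ℕ → ℕ) × (ℕ × ℕ → X) => (ω.1 n, ω) by fun_prop)
  have hlim : ∀ ω, Tendsto (fun m => f m ω) atTop
      (𝓝 (prsPow (ENNReal.ofReal s) (prsIdx A ω).encard)) := by
    intro ω
    have := prs_prod_tendsto (prsIdx A ω) ω.1 (fun p hp => hp.1) (ENNReal.ofReal s) hs1'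
    refine this.congr fun m => ?_
    refine Finset.prod_congr rfl fun n _ => Finset.prod_congr rfl fun k hk => ?_
    have : ((n, k) ∈ prsIdx A ω) ↔ ω.2 (n, k) ∈ A :=
      ⟨fun h => h.2, fun h => ⟨Finset.mem_range.1 hk, h⟩⟩
    simp only [this]
  have hlimI := tendsto_lintegral_of_dominated_convergence (μ := prsM P c) (fun _ => 1) hfm
    (F := f) (fun m => Eventually.of_forall fun ω => by
      refine Finset.prod_le_one' fun n _ => Finset.prod_le_one' fun k _ => ?_
      split_ifs
      · exact hs1'.le
      · exact le_rfl) (by simp) (Eventually.of_forall hlim)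
  refine tendsto_nhds_unique hlimI ?_
  simp_rw [hf]
  have : ∀ m, _ := fun m => prs_lintegral_prod P c A hA s hs0 hs1 m (hfm m)
  simp_rw [this]
  have hc : Continuous fun x : ℝ≥0∞ => EReal.exp (-((x * ENNReal.ofReal (1 - s) : ℝ≥0∞) : EReal)) :=
    ENNReal.continuous_exp.comp (continuous_neg.comp (continuous_coe_ennreal_ereal.comp
      (ENNReal.continuous_mul_const ENNReal.ofReal_ne_top)))
  exact (hc.tendsto _).comp (ENNReal.tendsto_nat_tsum fun n => (c n : ℝ≥0∞) * P n A)

lemma prs_inj_ae {X : Type*} [MeasurableSpace X] [MeasurableEq X] (P : ℕ → Measure X)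
    [∀ n, IsProbabilityMeasure (P n)] [∀ n, NullSingletonClass (P n)] (c : ℕ → NNReal) :
    ∀ᵐ ω ∂(prsM P c), Function.Injective ω.2 := by
  have h1 : ∀ p p' : ℕ × ℕ, p ≠ p' → ∀ᵐ Y ∂(Measure.infinitePi fun p : ℕ × ℕ => P p.1),
      Y p ≠ Y p' := by
    intro p p' hne
    have hm : MeasurableSet {z : X × X | z.1 = z.2} := measurableSet_eq_fun measurable_fst measurable_snd
    have h2 : ((Measure.infinitePi fun p : ℕ × ℕ => P p.1).map (fun ω ↦ (ω p, ω p')))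
        {z : X × X | z.1 = z.2} = 0 := by
      rw [Measure.infinitePi_map_eval_prod hne, Measure.prod_apply hm]
      have : ∀ x : X, (Prod.mk x ⁻¹' {z : X × X | z.1 = z.2}) = {x} := by
        intro x; ext y; simp [eq_comm]
      simp [this]
    rw [Measure.map_apply (by fun_prop) hm] at h2
    rw [ae_iff]
    simpa using h2
  have h2 : ∀ᵐ Y ∂(Measure.infinitePi fun p : ℕ × ℕ => P p.1), Function.Injective Y := by
    have : ∀ᵐ Y ∂(Measure.infinitePi fun p : ℕ × ℕ => P p.1), ∀ p p', p ≠ p' → Y p ≠ Y p' := by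
      rw [ae_all_iff]; intro p
      rw [ae_all_iff]; intro p'
      by_cases h : p = p'
      · simp [h]
      · simpa [h] using h1 p p' h
    filter_upwards [this] with Y hY p p' h
    by_contra hne
    exact hY p p' hne h
  exact Measure.quasiMeasurePreserving_snd.ae h2

lemma prs_void {Ω : Type*} [MeasurableSpace Ω] (P : Measure Ω) [IsProbabilityMeasure P]
    (N : Ω → ℕ∞) (hN : Measurable N) (a : ℝ≥0∞) (h : HasPoissonLaw P N a) :
    P {ω | N ω = 0} = EReal.exp (-(a : EReal)) := by
  unfold HasPoissonLaw at h
  split_ifs at h with h0 h1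
  · subst h0
    simp only [EReal.coe_ennreal_zero, neg_zero, EReal.exp_zero]
    exact (prob_compl_eq_zero_iff (hN (measurableSet_singleton 0))).1 h
  · subst h1
    simp only [EReal.coe_ennreal_top, EReal.neg_top, EReal.exp_bot]
    rw [measure_eq_zero_iff_ae_notMem]
    filter_upwards [h] with ω hω
    simp [hω]
  · have := h 0
    simp only [Nat.cast_zero, pow_zero, mul_one, Nat.factorial_zero, Nat.cast_one, div_one] at this
    rw [this, ← prs_exp_eq _ ENNReal.toReal_nonneg, ENNReal.ofReal_toReal h1]

lemma prs_finite {Ω : Type*} [MeasurableSpace Ω] (P : Measure Ω) [IsProbabilityMeasure P]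
    (N : Ω → ℕ∞) (hN : Measurable N) (a : ℝ≥0∞) (ha : a ≠ ∞) (h : HasPoissonLaw P N a) :
    ∀ᵐ ω ∂P, N ω ≠ ⊤ := by
  unfold HasPoissonLaw at h
  split_ifs at h with h0
  · filter_upwards [h] with ω hω
    simp [hω]
  · have hU : {ω | N ω ≠ ⊤} = ⋃ k : ℕ, {ω | N ω = (k : ℕ∞)} := by
      ext ω
      simp only [Set.mem_ofPred_eq, Set.mem_iUnion, ENat.ne_top_iff_exists]
      exact ⟨fun ⟨k, hk⟩ => ⟨k, hk.symm⟩, fun ⟨k, hk⟩ => ⟨k, hk.symm⟩⟩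
    have hm : MeasurableSet {ω | N ω ≠ ⊤} := (hN (measurableSet_singleton ⊤)).compl
    refine (prob_compl_eq_zero_iff hm).2 ?_
    rw [hU, measure_iUnion]
    · simp_rw [h]
      rw [← ENNReal.ofReal_tsum_of_nonneg (fun n => by positivity)]
      · have := (prs_pgf_hasSum a.toReal 1).tsum_eq
        simp only [one_pow, mul_one, sub_self, mul_zero, neg_zero, Real.exp_zero] at this
        rw [this, ENNReal.ofReal_one]
      · simpa using (prs_pgf_hasSum a.toReal 1).summable
    · intro i j hij
      rw [Function.onFun, Set.disjoint_left]
      intro ω h1 h2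
      simp only [Set.mem_ofPred_eq] at h1 h2
      exact hij (by exact_mod_cast h1.symm.trans h2)
    · exact fun k => hN (measurableSet_singleton (k : ℕ∞))

/-- Points of `F` isolated in `F` by a member of the basis `U`. -/
def prsIso {X : Type*} (U : ℕ → Set X) (F : Set X) : Set X := {x | ∃ n, F ∩ U n = {x}}

lemma prsIso_subset {X : Type*} (U : ℕ → Set X) (F : Set X) : prsIso U F ⊆ F := by
  rintro x ⟨n, hn⟩
  have : x ∈ F ∩ U n := by rw [hn]; rfl
  exact this.1

lemma prs_hit_meas {X : Type*} [τ : TopologicalSpace X] (O : Set X) (hO : IsOpen O) :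
    MeasurableSet {F : EffrosStar τ | (F.1 ∩ O).Nonempty} :=
  MeasurableSpace.measurableSet_generateFrom ⟨O, hO, rfl⟩

lemma prs_sing_iff {X : Type*} [TopologicalSpace X] [T2Space X] (U : ℕ → Set X)
    (hU : TopologicalSpace.IsTopologicalBasis (Set.range U)) (F : Set X) (n : ℕ) :
    (∃ x, F ∩ U n = {x}) ↔ (F ∩ U n).Nonempty ∧ ∀ i j, Disjoint (U i) (U j) →
      ¬ ((F ∩ (U n ∩ U i)).Nonempty ∧ (F ∩ (U n ∩ U j)).Nonempty) := by
  constructor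
  · rintro ⟨x, hx⟩
    refine ⟨by rw [hx]; exact Set.singleton_nonempty x, ?_⟩
    rintro i j hij ⟨⟨y, hy⟩, ⟨z, hz⟩⟩
    have h1 : y ∈ F ∩ U n := ⟨hy.1, hy.2.1⟩
    have h2 : z ∈ F ∩ U n := ⟨hz.1, hz.2.1⟩
    rw [hx] at h1 h2
    rw [Set.mem_singleton_iff] at h1 h2
    subst h1
    subst h2
    exact Set.disjoint_left.1 hij hy.2.2 hz.2.2
  · rintro ⟨⟨x, hx⟩, h⟩
    refine ⟨x, ?_⟩
    apply Set.Subset.antisymm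
    · intro y hy
      by_contra hne
      obtain ⟨V, W, hV, hW, hxV, hyW, hd⟩ := t2_separation (Ne.symm hne : x ≠ y)
      obtain ⟨_, ⟨i, rfl⟩, hxi, hi⟩ := hU.exists_subset_of_mem_open hxV hV
      obtain ⟨_, ⟨j, rfl⟩, hyj, hj⟩ := hU.exists_subset_of_mem_open hyW hW
      exact h i j (hd.mono hi hj) ⟨⟨x, hx.1, hx.2, hxi⟩, ⟨y, hy.1, hy.2, hyj⟩⟩
    · rintro _ rfl
      exact hx

lemma prs_sing_meas {X : Type*} [τ : TopologicalSpace X] [T2Space X] (U : ℕ → Set X)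
    (hU : TopologicalSpace.IsTopologicalBasis (Set.range U)) (n : ℕ) :
    MeasurableSet {F : EffrosStar τ | ∃ x, F.1 ∩ U n = {x}} := by
  have ho : ∀ n, IsOpen (U n) := fun n => hU.isOpen ⟨n, rfl⟩
  have : {F : EffrosStar τ | ∃ x, F.1 ∩ U n = {x}} = {F : EffrosStar τ | (F.1 ∩ U n).Nonempty} ∩
      ⋂ i, ⋂ j, ⋂ (_ : Disjoint (U i) (U j)), ({F : EffrosStar τ | (F.1 ∩ (U n ∩ U i)).Nonempty} ∩
        {F : EffrosStar τ | (F.1 ∩ (U n ∩ U j)).Nonempty})ᶜ := by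
    ext F
    simp only [Set.mem_ofPred_eq, prs_sing_iff U hU, Set.mem_inter_iff, Set.mem_iInter,
      Set.mem_compl_iff]
  rw [this]
  exact (prs_hit_meas _ (ho n)).inter (MeasurableSet.iInter fun i => MeasurableSet.iInter fun j =>
    MeasurableSet.iInter fun _ => ((prs_hit_meas _ ((ho n).inter (ho i))).inter
      (prs_hit_meas _ ((ho n).inter (ho j)))).compl)

lemma prs_singA_meas {X : Type*} [MeasurableSpace X] [τ : TopologicalSpace X] [T2Space X]
    [hB : BorelSpace X] (U : ℕ → Set X)
    (hU : TopologicalSpace.IsTopologicalBasis (Set.range U)) (n : ℕ) (A : Set X)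
    (hA : MeasurableSet A) :
    MeasurableSet {F : EffrosStar τ | ∃ x, F.1 ∩ U n = {x} ∧ x ∈ A} := by
  have hs := prs_sing_meas U hU n
  induction A, hA using MeasurableSet.induction_on_open with
  | isOpen O hO =>
    have : {F : EffrosStar τ | ∃ x, F.1 ∩ U n = {x} ∧ x ∈ O} =
        {F : EffrosStar τ | ∃ x, F.1 ∩ U n = {x}} ∩
          {F : EffrosStar τ | (F.1 ∩ (U n ∩ O)).Nonempty} := by
      ext F
      simp only [Set.mem_ofPred_eq, Set.mem_inter_iff]
      constructor
      · rintro ⟨x, hx, hxO⟩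
        have h1 : x ∈ F.1 ∩ U n := by rw [hx]; rfl
        exact ⟨⟨x, hx⟩, ⟨x, h1.1, h1.2, hxO⟩⟩
      · rintro ⟨⟨x, hx⟩, ⟨y, hy⟩⟩
        have h1 : y ∈ F.1 ∩ U n := ⟨hy.1, hy.2.1⟩
        rw [hx, Set.mem_singleton_iff] at h1
        exact ⟨x, hx, h1 ▸ hy.2.2⟩
    rw [this]
    exact hs.inter (prs_hit_meas _ ((hU.isOpen ⟨n, rfl⟩).inter hO))
  | compl A hA ih =>
    have : {F : EffrosStar τ | ∃ x, F.1 ∩ U n = {x} ∧ x ∈ Aᶜ} =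
        {F : EffrosStar τ | ∃ x, F.1 ∩ U n = {x}} \
          {F : EffrosStar τ | ∃ x, F.1 ∩ U n = {x} ∧ x ∈ A} := by
      ext F
      simp only [Set.mem_ofPred_eq, Set.mem_sdiff]
      constructor
      · rintro ⟨x, hx, hxA⟩
        refine ⟨⟨x, hx⟩, ?_⟩
        rintro ⟨y, hy, hyA⟩
        rw [hx, Set.singleton_eq_singleton_iff] at hy
        exact hxA (hy ▸ hyA)
      · rintro ⟨⟨x, hx⟩, h⟩
        exact ⟨x, hx, fun hxA => h ⟨x, hx, hxA⟩⟩
    rw [this]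
    exact hs.diff ih
  | iUnion f _ _ ih =>
    have : {F : EffrosStar τ | ∃ x, F.1 ∩ U n = {x} ∧ x ∈ ⋃ i, f i} =
        ⋃ i, {F : EffrosStar τ | ∃ x, F.1 ∩ U n = {x} ∧ x ∈ f i} := by
      ext F
      simp only [Set.mem_ofPred_eq, Set.mem_iUnion]
      constructor
      · rintro ⟨x, hx, i, hi⟩
        exact ⟨i, x, hx, hi⟩
      · rintro ⟨i, x, hx, hi⟩
        exact ⟨x, hx, i, hi⟩
    rw [this]
    exact MeasurableSet.iUnion ih

open Classical in
lemma prs_iso_encard {X : Type*} (U : ℕ → Set X) (F A : Set X) :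
    (A ∩ prsIso U F).encard = {n | (∃ x, F ∩ U n = {x} ∧ x ∈ A) ∧
      ∀ m < n, ¬ ((∃ x, F ∩ U m = {x}) ∧ (∃ x, F ∩ U n = {x}) ∧
        (F ∩ (U m ∩ U n)).Nonempty)}.encard := by
  set f : X → ℕ := fun x => if h : ∃ n, F ∩ U n = {x} then Nat.find h else 0 with hf
  have hfs : ∀ x (h : ∃ n, F ∩ U n = {x}), f x = Nat.find h := fun x h => by simp only [hf, dif_pos h]
  have hf1 : ∀ x ∈ prsIso U F, F ∩ U (f x) = {x} := by
    intro x hx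
    rw [hfs x hx]
    exact Nat.find_spec hx
  have hinj : Set.InjOn f (A ∩ prsIso U F) := by
    intro x hx y hy hxy
    have h1 := hf1 x hx.2
    rw [hxy, hf1 y hy.2, Set.singleton_eq_singleton_iff] at h1
    exact h1.symm
  rw [← hinj.encard_image]
  congr 1
  ext n
  simp only [Set.mem_image, Set.mem_ofPred_eq]
  constructor
  · rintro ⟨x, hx, rfl⟩
    refine ⟨⟨x, hf1 x hx.2, hx.1⟩, ?_⟩
    rintro m hm ⟨⟨y, hy⟩, -, ⟨z, hz⟩⟩
    rw [hfs x hx.2] at hm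
    refine Nat.find_min hx.2 hm ?_
    have h1 : z ∈ F ∩ U m := ⟨hz.1, hz.2.1⟩
    have h2 : z ∈ F ∩ U (f x) := ⟨hz.1, hz.2.2⟩
    rw [hf1 x hx.2, Set.mem_singleton_iff] at h2
    rw [hy, Set.mem_singleton_iff] at h1
    rw [hy, ← h1, h2]
  · rintro ⟨⟨x, hx, hxA⟩, h⟩
    have hxi : x ∈ prsIso U F := ⟨n, hx⟩
    refine ⟨x, ⟨hxA, hxi⟩, ?_⟩
    rw [hfs x hxi]
    refine (Nat.find_eq_iff hxi).2 ⟨hx, ?_⟩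
    intro m hm hmx
    have h1 : x ∈ F ∩ U m := by rw [hmx]; rfl
    have h2 : x ∈ F ∩ U n := by rw [hx]; rfl
    exact h m hm ⟨⟨x, hmx⟩, ⟨x, hx⟩, ⟨x, h1.1, h1.2, h2.2⟩⟩

lemma prs_iso_meas {X : Type*} [MeasurableSpace X] [τ : TopologicalSpace X] [T2Space X]
    [hB : BorelSpace X] (U : ℕ → Set X)
    (hU : TopologicalSpace.IsTopologicalBasis (Set.range U)) (A : Set X)
    (hA : MeasurableSet A) :
    Measurable fun F : EffrosStar τ => (A ∩ prsIso U F.1).encard := by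
  simp_rw [prs_iso_encard]
  apply prs_encard_meas
  intro n
  have : {F : EffrosStar τ | n ∈ {n | (∃ x, F.1 ∩ U n = {x} ∧ x ∈ A) ∧
      ∀ m < n, ¬ ((∃ x, F.1 ∩ U m = {x}) ∧ (∃ x, F.1 ∩ U n = {x}) ∧
        (F.1 ∩ (U m ∩ U n)).Nonempty)}} = {F : EffrosStar τ | ∃ x, F.1 ∩ U n = {x} ∧ x ∈ A} ∩
      ⋂ m, ⋂ (_ : m < n), ({F : EffrosStar τ | ∃ x, F.1 ∩ U m = {x}} ∩
        ({F : EffrosStar τ | ∃ x, F.1 ∩ U n = {x}} ∩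
          {F : EffrosStar τ | (F.1 ∩ (U m ∩ U n)).Nonempty}))ᶜ := by
    ext F
    simp only [Set.mem_ofPred_eq, Set.mem_inter_iff, Set.mem_iInter, Set.mem_compl_iff]
  rw [this]
  exact (prs_singA_meas U hU n A hA).inter (MeasurableSet.iInter fun m => MeasurableSet.iInter
    fun _ => ((prs_sing_meas U hU m).inter ((prs_sing_meas U hU n).inter
      (prs_hit_meas _ ((hU.isOpen ⟨m, rfl⟩).inter (hU.isOpen ⟨n, rfl⟩))))).compl)

lemma prs_good_iff {X : Type*} [TopologicalSpace X] (U : ℕ → Set X)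
    (hU : TopologicalSpace.IsTopologicalBasis (Set.range U)) (F : Set X) :
    F ⊆ closure (prsIso U F) ↔ ∀ n, (F ∩ U n).Nonempty → ∃ m, (∃ x, F ∩ U m = {x}) ∧
      (F ∩ (U m ∩ U n)).Nonempty := by
  constructor
  · rintro h n ⟨x, hxF, hxn⟩
    obtain ⟨y, hyn, m, hm⟩ := mem_closure_iff.1 (h hxF) (U n) (hU.isOpen ⟨n, rfl⟩) hxn
    have h1 : y ∈ F ∩ U m := by rw [hm]; rfl
    exact ⟨m, ⟨y, hm⟩, ⟨y, h1.1, h1.2, hyn⟩⟩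
  · intro h x hx
    rw [mem_closure_iff]
    intro O hO hxO
    obtain ⟨_, ⟨n, rfl⟩, hxn, hn⟩ := hU.exists_subset_of_mem_open hxO hO
    obtain ⟨m, ⟨y, hy⟩, ⟨z, hz⟩⟩ := h n ⟨x, hx, hxn⟩
    have h1 : z ∈ F ∩ U m := ⟨hz.1, hz.2.1⟩
    rw [hy, Set.mem_singleton_iff] at h1
    subst h1
    exact ⟨z, hn hz.2.2, m, hy⟩

lemma prs_good_meas {X : Type*} [τ : TopologicalSpace X] [T2Space X] (U : ℕ → Set X)
    (hU : TopologicalSpace.IsTopologicalBasis (Set.range U)) :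
    MeasurableSet {F : EffrosStar τ | F.1 ⊆ closure (prsIso U F.1)} := by
  have : {F : EffrosStar τ | F.1 ⊆ closure (prsIso U F.1)} =
      ⋂ n, ({F : EffrosStar τ | (F.1 ∩ U n).Nonempty}ᶜ ∪ ⋃ m,
        ({F : EffrosStar τ | ∃ x, F.1 ∩ U m = {x}} ∩
          {F : EffrosStar τ | (F.1 ∩ (U m ∩ U n)).Nonempty})) := by
    ext F
    simp only [Set.mem_ofPred_eq, prs_good_iff U hU, Set.mem_iInter, Set.mem_union,
      Set.mem_compl_iff, Set.mem_iUnion, Set.mem_inter_iff, imp_iff_not_or]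
  rw [this]
  exact MeasurableSet.iInter fun n => (prs_hit_meas _ (hU.isOpen ⟨n, rfl⟩)).compl.union
    (MeasurableSet.iUnion fun m => (prs_sing_meas U hU m).inter
      (prs_hit_meas _ ((hU.isOpen ⟨m, rfl⟩).inter (hU.isOpen ⟨n, rfl⟩))))

open Classical in
/-- The counting variables. -/
def prsXi {X : Type*} [τ : TopologicalSpace X] (U : ℕ → Set X) (A : Set X) (F : EffrosStar τ) :
    ℕ∞ :=
  if F.1 ⊆ closure (prsIso U F.1) then (A ∩ prsIso U F.1).encard else 0

lemma prs_Xi_meas {X : Type*} [MeasurableSpace X] [τ : TopologicalSpace X] [T2Space X]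
    [hB : BorelSpace X] (U : ℕ → Set X)
    (hU : TopologicalSpace.IsTopologicalBasis (Set.range U)) (A : Set X)
    (hA : MeasurableSet A) : Measurable (prsXi (τ := τ) U A) :=
  Measurable.ite (prs_good_meas U hU) (prs_iso_meas U hU A hA) measurable_const

lemma prs_Xi_discrete {X : Type*} [τ : TopologicalSpace X] (U : ℕ → Set X)
    (hU : TopologicalSpace.IsTopologicalBasis (Set.range U)) (A : Set X)
    (F : EffrosStar τ) (hF : IsTauDiscrete τ F.1) : prsXi U A F = (A ∩ F.1).encard := by
  have h : prsIso U F.1 = F.1 := by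
    apply Set.Subset.antisymm (prsIso_subset U F.1)
    intro x hx
    obtain ⟨O, hO, hxO, hFO⟩ := hF x hx
    obtain ⟨_, ⟨n, rfl⟩, hxn, hn⟩ := hU.exists_subset_of_mem_open hxO hO
    refine ⟨n, ?_⟩
    apply Set.Subset.antisymm
    · rw [← hFO]
      exact Set.inter_subset_inter_right _ hn
    · rintro _ rfl
      exact ⟨hx, hxn⟩
  have hg : F.1 ⊆ closure (prsIso U F.1) := by rw [h]; exact subset_closure
  rw [prsXi, if_pos hg, h]

lemma prs_mem_of_finite {X : Type*} [TopologicalSpace X] [T1Space X] (S O : Set X) (hO : IsOpen O)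
    (hfin : (S ∩ O).Finite) (x : X) (hx : x ∈ closure S) (hxO : x ∈ O) : x ∈ S := by
  have : x ∈ closure (S ∩ O) := by
    rw [Set.inter_comm]
    exact hO.inter_closure ⟨hxO, hx⟩
  rw [hfin.isClosed.closure_eq] at this
  exact this.1

lemma prs_discrete_of {X : Type*} [τ : TopologicalSpace X] [T1Space X] (U : ℕ → Set X)
    (hU : TopologicalSpace.IsTopologicalBasis (Set.range U)) (F : Set X)
    (hg : F ⊆ closure (prsIso U F)) (h : ∀ x : X, ∃ n, x ∈ U n ∧ (prsIso U F ∩ U n).Finite) :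
    IsTauDiscrete τ F := by
  intro x hx
  obtain ⟨n, hxn, hfin⟩ := h x
  obtain ⟨m, hm⟩ := prs_mem_of_finite (prsIso U F) (U n) (hU.isOpen ⟨n, rfl⟩) hfin x (hg hx) hxn
  have h1 : x ∈ F ∩ U m := by rw [hm]; rfl
  exact ⟨U m, hU.isOpen ⟨m, rfl⟩, h1.2, hm⟩

lemma prs_cover {X : Type*} [MeasurableSpace X] [TopologicalSpace X] (U : ℕ → Set X)
    (hU : TopologicalSpace.IsTopologicalBasis (Set.range U)) (μ : Measure X)
    [IsLocallyFiniteMeasure μ] (x : X) : ∃ n, x ∈ U n ∧ μ (U n) ≠ ∞ := by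
  obtain ⟨s, hs, hfin⟩ := μ.finiteAt_nhds x
  obtain ⟨_, ⟨n, rfl⟩, hxn, hn⟩ := hU.mem_nhds_iff.1 hs
  exact ⟨n, hxn, ((measure_mono hn).trans_lt hfin).ne⟩

/-- A PPP is almost surely discrete and good. -/
lemma prs_ppp_good {X : Type*} [MeasurableSpace X] [τ : TopologicalSpace X] (U : ℕ → Set X)
    (μ : Measure X) (hμ : μ Set.univ = ∞)
    (ν : Measure (EffrosStar τ)) (h : IsPPP μ ν (prsXi (τ := τ) U)) :
    ∀ᵐ F ∂ν, F.1 ⊆ closure (prsIso U F.1) := by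
  have h1 := h.law Set.univ MeasurableSet.univ
  simp only [HasPoissonLaw, hμ, ENNReal.top_ne_zero, if_false, if_true] at h1
  filter_upwards [h1] with F hF
  by_contra hne
  simp [prsXi, hne] at hF

lemma prs_support {X : Type*} [MeasurableSpace X] [τ : TopologicalSpace X] [T2Space X]
    [hB : BorelSpace X] (U : ℕ → Set X)
    (hU : TopologicalSpace.IsTopologicalBasis (Set.range U))
    (μ : Measure X) (hμ : μ Set.univ = ∞) [IsLocallyFiniteMeasure μ]
    (ν : Measure (EffrosStar τ)) [IsProbabilityMeasure ν] (h : IsPPP μ ν (prsXi (τ := τ) U)) :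
    ∃ D : Set (EffrosStar τ), MeasurableSet D ∧ ν D = 1 ∧
          ∀ F ∈ D, IsTauDiscrete τ (F : EffrosStar τ).1 := by
  set D : Set (EffrosStar τ) := {F : EffrosStar τ | F.1 ⊆ closure (prsIso U F.1)} ∩
    ⋂ n, ⋂ (_ : μ (U n) ≠ ∞), {F : EffrosStar τ | prsXi U (U n) F ≠ ⊤} with hD
  have hDm : MeasurableSet D := (prs_good_meas U hU).inter (MeasurableSet.iInter fun n =>
    MeasurableSet.iInter fun _ => (prs_Xi_meas U hU (U n) (hU.isOpen ⟨n, rfl⟩).measurableSet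
      (measurableSet_singleton ⊤)).compl)
  refine ⟨D, hDm, ?_, ?_⟩
  · refine (prob_compl_eq_zero_iff hDm).1 ?_
    change ∀ᵐ F ∂ν, F ∈ D
    have h2 : ∀ᵐ F ∂ν, ∀ n, μ (U n) ≠ ∞ → prsXi U (U n) F ≠ ⊤ := by
      rw [ae_all_iff]; intro n
      by_cases hn : μ (U n) = ∞
      · simp [hn]
      · have := prs_finite ν _ (h.measurable _ (hU.isOpen ⟨n, rfl⟩).measurableSet) _ hn
          (h.law _ (hU.isOpen ⟨n, rfl⟩).measurableSet)
        filter_upwards [this] with F hF _ using hF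
    filter_upwards [prs_ppp_good U μ hμ ν h, h2] with F hF1 hF2
    refine ⟨hF1, ?_⟩
    simp only [Set.mem_iInter]
    exact hF2
  · rintro F ⟨hF1, hF2⟩
    simp only [Set.mem_iInter] at hF2
    apply prs_discrete_of U hU F.1 hF1
    intro x
    obtain ⟨n, hxn, hn⟩ := prs_cover U hU μ x
    refine ⟨n, hxn, ?_⟩
    have := hF2 n hn
    have hF1' : F.1 ⊆ closure (prsIso U F.1) := hF1
    simp only [Set.mem_ofPred_eq, prsXi, if_pos hF1'] at this
    rw [Set.inter_comm]
    exact Set.encard_ne_top_iff.1 this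

lemma prs_injective {X : Type*} [MeasurableSpace X] {Ω : Type*} [MeasurableSpace Ω]
    (μ₁ μ₂ : Measure X) (ν : Measure Ω) [IsProbabilityMeasure ν] (Ξ : Set X → Ω → ℕ∞)
    (h₁ : IsPPP μ₁ ν Ξ) (h₂ : IsPPP μ₂ ν Ξ) : μ₁ = μ₂ := by
  ext A hA
  have e1 := prs_void ν _ (h₁.measurable A hA) _ (h₁.law A hA)
  have e2 := prs_void ν _ (h₂.measurable A hA) _ (h₂.law A hA)
  have := EReal.exp_strictMono.injective (e1.symm.trans e2)
  exact_mod_cast neg_injective this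

lemma prs_unique {X : Type*} [MeasurableSpace X] [τ : TopologicalSpace X]
    [hB : BorelSpace X] (U : ℕ → Set X)
    (μ : Measure X) (hμ : μ Set.univ = ∞)
    (ν₁ ν₂ : Measure (EffrosStar τ)) [IsProbabilityMeasure ν₁] [IsProbabilityMeasure ν₂]
    (h₁ : IsPPP μ ν₁ (prsXi (τ := τ) U)) (h₂ : IsPPP μ ν₂ (prsXi (τ := τ) U)) : ν₁ = ν₂ := by
  have hvoid : ∀ ν : Measure (EffrosStar τ), IsProbabilityMeasure ν →
      IsPPP μ ν (prsXi (τ := τ) U) → ∀ O : Set X, IsOpen O →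
      ν {F : EffrosStar τ | (F.1 ∩ O).Nonempty}ᶜ = EReal.exp (-(μ O : EReal)) := by
    intro ν hν h O hO
    rw [← prs_void ν _ (h.measurable O hO.measurableSet) _ (h.law O hO.measurableSet)]
    apply measure_congr
    filter_upwards [prs_ppp_good U μ hμ ν h] with F hF
    apply propext
    change (¬ (F.1 ∩ O).Nonempty) ↔ prsXi U O F = 0
    simp only [prsXi, if_pos hF, Set.encard_eq_zero, ← Set.not_nonempty_iff_eq_empty, not_iff_not]
    constructor
    · rintro ⟨x, hxF, hxO⟩
      exact mem_closure_iff.1 (hF hxF) O hO hxO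
    · rintro ⟨x, hxO, hx⟩
      exact ⟨x, prsIso_subset U _ hx, hxO⟩
  refine ext_of_generate_finite
    {s | ∃ O : Set X, IsOpen O ∧ s = {F : EffrosStar τ | (F.1 ∩ O).Nonempty}ᶜ} ?_ ?_ ?_ ?_
  · apply le_antisymm
    · apply MeasurableSpace.generateFrom_le
      rintro s ⟨O, hO, rfl⟩
      rw [← MeasurableSet.compl_iff]
      exact MeasurableSpace.measurableSet_generateFrom ⟨O, hO, rfl⟩
    · apply MeasurableSpace.generateFrom_le
      rintro s ⟨O, hO, rfl⟩
      exact (prs_hit_meas O hO).compl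
  · rintro _ ⟨O, hO, rfl⟩ _ ⟨V, hV, rfl⟩ _
    refine ⟨O ∪ V, hO.union hV, ?_⟩
    ext F
    simp only [Set.mem_inter_iff, Set.mem_compl_iff, Set.mem_ofPred_eq, Set.inter_union_distrib_left,
      Set.union_nonempty, not_or]
  · rintro _ ⟨O, hO, rfl⟩
    rw [hvoid ν₁ inferInstance h₁ O hO, hvoid ν₂ inferInstance h₂ O hO]
  · simp

lemma prs_decomp {X : Type*} [MeasurableSpace X] (μ : Measure X) [SFinite μ]
    [NullSingletonClass μ] (hμ : μ Set.univ = ∞) :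
    ∃ (P : ℕ → Measure X) (c : ℕ → NNReal), (∀ n, IsProbabilityMeasure (P n)) ∧
      (∀ n, NullSingletonClass (P n)) ∧
      ∀ A, MeasurableSet A → μ A = ∑' n, c n * P n A := by
  classical
  have hne : NeZero μ := ⟨by rintro rfl; simp at hμ⟩
  refine ⟨fun n => if sfiniteSeq μ n = 0 then μ.toFinite else
    (sfiniteSeq μ n Set.univ)⁻¹ • sfiniteSeq μ n, fun n => (sfiniteSeq μ n Set.univ).toNNReal,
    ?_, ?_, ?_⟩
  · intro n
    by_cases h : sfiniteSeq μ n = 0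
    · simp only [h, if_true]; infer_instance
    · simp only [h, if_false]
      have : NeZero (sfiniteSeq μ n) := ⟨h⟩
      infer_instance
  · intro n
    by_cases h : sfiniteSeq μ n = 0
    · simp only [h, if_true]
      exact ⟨fun x => by simp⟩
    · simp only [h, if_false]
      refine ⟨fun x => ?_⟩
      have : sfiniteSeq μ n {x} = 0 :=
        le_antisymm ((sfiniteSeq_le μ n {x}).trans (measure_singleton x).le) (zero_le)
      simp [this]
  · intro A hA
    conv_lhs => rw [← sum_sfiniteSeq μ]
    rw [Measure.sum_apply _ hA]
    congr 1; ext n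
    by_cases h : sfiniteSeq μ n = 0
    · simp [h]
    · simp only [h, if_false]
      rw [ENNReal.coe_toNNReal (measure_ne_top _ _), Measure.smul_apply, smul_eq_mul, ← mul_assoc,
        ENNReal.mul_inv_cancel _ (measure_ne_top _ _), one_mul]
      simpa using h

lemma prs_law_congr {Ω : Type*} [MeasurableSpace Ω] (P : Measure Ω) (N N' : Ω → ℕ∞) (a : ℝ≥0∞)
    (h : N =ᵐ[P] N') (hN : HasPoissonLaw P N a) : HasPoissonLaw P N' a := by
  unfold HasPoissonLaw at hN ⊢
  split_ifs at hN ⊢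
  · filter_upwards [h, hN] with ω h1 h2
    rw [← h1, h2]
  · filter_upwards [h, hN] with ω h1 h2
    rw [← h1, h2]
  · intro k
    rw [← hN k]
    apply measure_congr
    filter_upwards [h] with ω h1
    apply propext
    change N' ω = k ↔ N ω = k
    rw [h1]

lemma prs_law_map {Ω Ω' : Type*} [MeasurableSpace Ω] [MeasurableSpace Ω'] (P : Measure Ω)
    (f : Ω → Ω') (hf : Measurable f) (N : Ω' → ℕ∞) (hNm : Measurable N) (a : ℝ≥0∞)
    (hN : HasPoissonLaw P (N ∘ f) a) : HasPoissonLaw (P.map f) N a := by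
  unfold HasPoissonLaw at hN ⊢
  split_ifs at hN ⊢
  · exact (ae_map_iff hf.aemeasurable (p := fun y => N y = 0)
      (hNm (measurableSet_singleton 0))).2 hN
  · exact (ae_map_iff hf.aemeasurable (p := fun y => N y = ⊤)
      (hNm (measurableSet_singleton ⊤))).2 hN
  · intro k
    rw [← hN k]
    exact Measure.map_apply hf (hNm (measurableSet_singleton (k : ℕ∞)))

lemma prs_exists {X : Type*} [MeasurableSpace X] [τ : TopologicalSpace X] [PolishSpace X]
    [hB : BorelSpace X] (U : ℕ → Set X)
    (hU : TopologicalSpace.IsTopologicalBasis (Set.range U))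
    (μ : Measure X) [SFinite μ] [NullSingletonClass μ] (hμ : μ Set.univ = ∞)
    [IsLocallyFiniteMeasure μ] :
    ∃ ν : Measure (EffrosStar τ), IsProbabilityMeasure ν ∧ IsPPP μ ν (prsXi (τ := τ) U) := by
  classical
  obtain ⟨P, c, hP, hna, hsum⟩ := prs_decomp μ hμ
  have ho : ∀ n, IsOpen (U n) := fun n => hU.isOpen ⟨n, rfl⟩
  have hlaw : ∀ A, MeasurableSet A → HasPoissonLaw (prsM P c) (fun ω => (prsIdx A ω).encard) (μ A) :=
    fun A hA => by rw [hsum A hA]; exact prs_cnt_law P c A hA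
  set S : (ℕ → ℕ) × (ℕ × ℕ → X) → Set X := fun ω => ω.2 '' prsIdx Set.univ ω with hS
  have hSA : ∀ A ω, A ∩ S ω = ω.2 '' prsIdx A ω := by
    intro A ω
    ext x
    simp only [hS, prsIdx, Set.mem_inter_iff, Set.mem_image, Set.mem_ofPred_eq, Set.mem_univ,
      and_true]
    constructor
    · rintro ⟨hx, p, hp, rfl⟩
      exact ⟨p, ⟨hp, hx⟩, rfl⟩
    · rintro ⟨p, ⟨hp, hx⟩, rfl⟩
      exact ⟨hx, p, hp, rfl⟩
  have hgood : ∀ᵐ ω ∂(prsM P c), (∀ A, (A ∩ S ω).encard = (prsIdx A ω).encard) ∧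
      IsClosed (S ω) ∧ (S ω).Infinite ∧ IsTauDiscrete τ (S ω) := by
    have h1 := prs_inj_ae P c
    have h2 : ∀ᵐ ω ∂(prsM P c), (prsIdx (Set.univ : Set X) ω).encard = ⊤ := by
      have := hlaw Set.univ MeasurableSet.univ
      simpa only [HasPoissonLaw, hμ, ENNReal.top_ne_zero, if_false, if_true] using this
    have h3 : ∀ᵐ ω ∂(prsM P c), ∀ n, μ (U n) ≠ ∞ → (prsIdx (U n) ω).encard ≠ ⊤ := by
      rw [ae_all_iff]; intro n
      by_cases hn : μ (U n) = ∞
      · simp [hn]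
      · have := prs_finite _ _ (prs_cnt_meas (U n) (ho n).measurableSet) _ hn
          (hlaw (U n) (ho n).measurableSet)
        filter_upwards [this] with F hF _ using hF
    filter_upwards [h1, h2, h3] with ω h1 h2 h3
    have hc : ∀ A, (A ∩ S ω).encard = (prsIdx A ω).encard := by
      intro A
      rw [hSA, h1.encard_image]
    have hfin : ∀ x, ∃ n, x ∈ U n ∧ (S ω ∩ U n).Finite := by
      intro x
      obtain ⟨n, hxn, hn⟩ := prs_cover U hU μ x
      refine ⟨n, hxn, ?_⟩
      rw [Set.inter_comm, ← Set.encard_ne_top_iff, hc]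
      exact h3 n hn
    refine ⟨hc, ?_, ?_, ?_⟩
    · apply isClosed_of_closure_subset
      intro x hx
      obtain ⟨n, hxn, hn⟩ := hfin x
      exact prs_mem_of_finite _ _ (ho n) hn x hx hxn
    · rw [← Set.encard_eq_top_iff, ← h2, ← hc, Set.univ_inter]
    · intro x hx
      obtain ⟨n, hxn, hn⟩ := hfin x
      refine ⟨U n \ ((S ω ∩ U n) \ {x}), (ho n).sdiff (hn.subset Set.sdiff_subset).isClosed,
        ⟨hxn, fun h => h.2 rfl⟩, ?_⟩
      ext y
      simp only [Set.mem_inter_iff, Set.mem_sdiff, Set.mem_singleton_iff]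
      constructor
      · rintro ⟨h4, h5, h6⟩
        by_contra hne
        exact h6 ⟨⟨h4, h5⟩, hne⟩
      · rintro rfl
        exact ⟨hx, hxn, fun h => h.2 rfl⟩
  obtain ⟨G, hG, hGm, hGp⟩ := hgood.exists_measurable_mem
  have hinf : (Set.univ : Set X).Infinite := by
    intro hfin
    have : μ Set.univ = 0 := hfin.measure_zero μ
    rw [hμ] at this
    exact ENNReal.top_ne_zero this
  set Φ : (ℕ → ℕ) × (ℕ × ℕ → X) → EffrosStar τ := fun ω =>
    if h : ω ∈ G then ⟨S ω, (hGp ω h).2.1, (hGp ω h).2.2.1⟩ else ⟨Set.univ, isClosed_univ, hinf⟩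
    with hΦ
  have hΦ1 : ∀ ω ∈ G, (Φ ω).1 = S ω := fun ω hω => congrArg Subtype.val (dif_pos hω)
  have hΦ2 : ∀ ω ∉ G, (Φ ω).1 = Set.univ := fun ω hω => congrArg Subtype.val (dif_neg hω)
  have hΦm : Measurable Φ := by
    apply measurable_generateFrom
    rintro _ ⟨O, hO, rfl⟩
    have : Φ ⁻¹' {F : EffrosStar τ | (F.1 ∩ O).Nonempty} =
        (G ∩ ⋃ p, {ω | p ∈ prsIdx O ω}) ∪ (Gᶜ ∩ {_ω | O.Nonempty}) := by
      ext ω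
      by_cases hω : ω ∈ G
      · simp only [Set.mem_preimage, Set.mem_ofPred_eq, hΦ1 ω hω, Set.inter_comm (S ω), hSA,
          Set.image_nonempty, Set.mem_union, Set.mem_inter_iff, hω, true_and, Set.mem_iUnion,
          Set.mem_compl_iff, not_true_eq_false, false_and, or_false]
        rfl
      · simp only [Set.mem_preimage, Set.mem_ofPred_eq, hΦ2 ω hω, Set.univ_inter, Set.mem_union,
          Set.mem_inter_iff, hω, false_and, Set.mem_compl_iff, not_false_eq_true, true_and,
          false_or]
    rw [this]
    exact (hGm.inter (MeasurableSet.iUnion fun p => prs_idx_meas O hO.measurableSet p)).union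
      (hGm.compl.inter (MeasurableSet.const _))
  refine ⟨(prsM P c).map Φ, Measure.isProbabilityMeasure_map hΦm.aemeasurable, ?_, ?_, ?_⟩
  · exact fun A hA => prs_Xi_meas U hU A hA
  · intro A hA
    apply prs_law_map _ _ hΦm _ (prs_Xi_meas U hU A hA)
    refine prs_law_congr _ _ _ _ ?_ (hlaw A hA)
    filter_upwards [hG] with ω hω
    have hd : IsTauDiscrete τ (Φ ω).1 := by rw [hΦ1 ω hω]; exact (hGp ω hω).2.2.2
    rw [Function.comp_apply, prs_Xi_discrete U hU A (Φ ω) hd, hΦ1 ω hω, (hGp ω hω).1 A]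
  · intro A B _ _ hAB
    refine Eventually.of_forall fun F => ?_
    unfold prsXi
    split_ifs
    · rw [Set.union_inter_distrib_right, Set.encard_union_eq]
      exact hAB.mono Set.inter_subset_left Set.inter_subset_left
    · simp

theorem poisson_random_set
    {X : Type*} [MeasurableSpace X]
    (τ : TopologicalSpace X) (hτ : @PolishSpace X τ) (hB : @BorelSpace X τ _) :
    ∃ Ξ : Set X → EffrosStar τ → ℕ∞,
      (∀ A : Set X, MeasurableSet A → Measurable (Ξ A)) ∧
      -- on `τ`-discrete closed sets the `Ξ_A` count points: `Ξ_A(F) = #(A ∩ F)`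
      (∀ F : EffrosStar τ, IsTauDiscrete τ F.1 →
        ∀ A : Set X, MeasurableSet A → Ξ A F = (A ∩ F.1).encard) ∧
      -- for every non-atomic σ-finite infinite `τ`-locally finite Borel measure `μ`
      -- there is a unique random closed set `μ*_τ` making `{Ξ_A}` a Poisson point
      -- process with base space `(X, B, μ)` ...
      (∀ μ : Measure X, SigmaFinite μ → NoAtoms μ → μ Set.univ = ∞ →
        @IsLocallyFiniteMeasure X _ τ μ →
        ∃! ν : Measure (EffrosStar τ), IsProbabilityMeasure ν ∧ IsPPP μ ν Ξ) ∧
      (∀ μ₁ μ₂ : Measure X,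
        SigmaFinite μ₁ → NoAtoms μ₁ → μ₁ Set.univ = ∞ → @IsLocallyFiniteMeasure X _ τ μ₁ →
        SigmaFinite μ₂ → NoAtoms μ₂ → μ₂ Set.univ = ∞ → @IsLocallyFiniteMeasure X _ τ μ₂ →
        ∀ ν : Measure (EffrosStar τ), IsProbabilityMeasure ν →
          IsPPP μ₁ ν Ξ → IsPPP μ₂ ν Ξ → μ₁ = μ₂) ∧
      -- ... and each `μ*_τ` is supported on the class of `τ`-discrete closed sets
      (∀ μ : Measure X, SigmaFinite μ → NoAtoms μ → μ Set.univ = ∞ →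
        @IsLocallyFiniteMeasure X _ τ μ →
        ∀ ν : Measure (EffrosStar τ), IsProbabilityMeasure ν → IsPPP μ ν Ξ →
        ∃ D : Set (EffrosStar τ), MeasurableSet D ∧ ν D = 1 ∧
          ∀ F ∈ D, IsTauDiscrete τ (F : EffrosStar τ).1) := by
  have hT2 : T2Space X := inferInstance
  obtain ⟨U, hU⟩ := TopologicalSpace.exists_seq_basis X
  refine ⟨prsXi U, fun A hA => prs_Xi_meas U hU A hA,
    fun F hF A _ => prs_Xi_discrete U hU A F hF, ?_, ?_, ?_⟩
  · intro μ hσ hna hμ hlf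
    have hna' : NullSingletonClass μ := hna
    obtain ⟨ν, hν, hp⟩ := prs_exists U hU μ hμ
    refine ⟨ν, ⟨hν, hp⟩, ?_⟩
    rintro ν' ⟨hν', hp'⟩
    exact prs_unique U μ hμ ν' ν hp' hp
  · intro μ₁ μ₂ _ _ _ _ _ _ _ _ ν hν h₁ h₂
    exact prs_injective μ₁ μ₂ ν _ h₁ h₂
  · intro μ _ _ hμ hlf ν hν h
    exact prs_support U hU μ hμ ν h

end
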